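/- Let (Ω, P) be a probability space, n ≥ 1 an integer, and let l_1, …, l_{n+1} : Ω → {0,1} be exchangeable random variables. Then (1/(n+1)) E[ Σ_{i=1}^{n} l_i ] ≤ E[l_{n+1}] ≤ (1/(n+1)) E[ Σ_{i=1}^{n} l_i ] + 1/(n+1). In particular, the calibration quantity α_l := (1/(n+1)) Σ_{i=1}^{n} l_i satisfies E[α_l] ≤ E[l_{n+1}] ≤ E[α_l] + 1/(n+1). -/

import Mathlib

/-!
Exchangeability, applied to the transposition of `i` and the test index, gives every `l i` the same
mean `p`. Hence `E[α_l] = n p / (n + 1) = p - p / (n + 1)`, and both bounds follow from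
`0 ≤ p ≤ 1`, which holds because the test loss is `{0,1}`-valued.
-/

open MeasureTheory

/-- The coordinates of an exchangeable real vector all have the same mean. -/
theorem integral_eq_last_of_exchangeable
    {Ω : Type*} [MeasurableSpace Ω] (μ : Measure Ω) (n : ℕ)
    (l : Fin (n + 1) → Ω → ℝ) (hmeas : ∀ i, Measurable (l i))
    (hexch : ∀ π : Equiv.Perm (Fin (n + 1)),
      Measure.map (fun ω => fun i => l (π i) ω) μ
        = Measure.map (fun ω => fun i => l i ω) μ) (i : Fin (n + 1)) :
    (∫ ω, l i ω ∂μ) = ∫ ω, l (Fin.last n) ω ∂μ := by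
  have h := congrArg (fun ν => ∫ x, x (Fin.last n) ∂ν) (hexch (Equiv.swap i (Fin.last n)))
  rw [integral_map (measurable_pi_lambda _ fun j => hmeas _).aemeasurable
      (measurable_pi_apply _).aestronglyMeasurable,
    integral_map (measurable_pi_lambda _ fun j => hmeas _).aemeasurable
      (measurable_pi_apply _).aestronglyMeasurable] at h
  simpa using h

/-- For `{0,1}`-valued exchangeable random variables
`l 1, …, l (n+1)` (test index `Fin.last n`), with the minimum achievable risk
level `α_l(ω) := (1/(n+1)) ∑_{i=1}^{n} l_i(ω)`, one has
`E[α_l] ≤ E[l_{n+1}] ≤ E[α_l] + 1/(n+1)`. -/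
theorem mrl_bounds_of_exchangeable
    {Ω : Type*} [MeasurableSpace Ω] (μ : Measure Ω) [IsProbabilityMeasure μ]
    (n : ℕ) (hn : 1 ≤ n)
    (l : Fin (n + 1) → Ω → ℝ)
    (hmeas : ∀ i, Measurable (l i))
    (hval : ∀ i ω, l i ω = 0 ∨ l i ω = 1)
    (hexch : ∀ π : Equiv.Perm (Fin (n + 1)),
      Measure.map (fun ω => fun i => l (π i) ω) μ
        = Measure.map (fun ω => fun i => l i ω) μ)
    (αl : Ω → ℝ)
    (hαl : ∀ ω, αl ω = (1 / ((n : ℝ) + 1)) * ∑ i : Fin n, l i.castSucc ω) :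
    (∫ ω, αl ω ∂μ) ≤ (∫ ω, l (Fin.last n) ω ∂μ) ∧
      (∫ ω, l (Fin.last n) ω ∂μ) ≤ (∫ ω, αl ω ∂μ) + 1 / ((n : ℝ) + 1) := by
  have h_nonneg : ∀ i ω, 0 ≤ l i ω := fun i ω => by
    rcases hval i ω with h | h <;> rw [h]; norm_num
  have h_le : ∀ i ω, l i ω ≤ 1 := fun i ω => by
    rcases hval i ω with h | h <;> rw [h]; norm_num
  have h_int : ∀ i, Integrable (l i) μ := fun i =>
    Integrable.of_bound (hmeas i).aestronglyMeasurable 1 <| .of_forall fun ω => by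
      rw [Real.norm_of_nonneg (h_nonneg i ω)]; exact h_le i ω
  have h_mean : (∫ ω, αl ω ∂μ)
      = (1 / ((n : ℝ) + 1)) * (n * ∫ ω, l (Fin.last n) ω ∂μ) := by
    simp_rw [hαl]
    rw [integral_const_mul, integral_finsetSum _ fun i _ => h_int _]
    simp_rw [fun i : Fin n => integral_eq_last_of_exchangeable μ n l hmeas hexch i.castSucc]
    simp
  have hp0 : 0 ≤ ∫ ω, l (Fin.last n) ω ∂μ := integral_nonneg (h_nonneg _)
  have hp1 : (∫ ω, l (Fin.last n) ω ∂μ) ≤ 1 := by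
    simpa using integral_mono (h_int (Fin.last n)) (integrable_const (1 : ℝ)) (h_le _)
  rw [h_mean]
  generalize (∫ ω, l (Fin.last n) ω ∂μ) = p at hp0 hp1
  have hn1 : (0 : ℝ) < n + 1 := by positivity
  have key : (1 / ((n : ℝ) + 1)) * (n * p) = p - p / (n + 1) := by field_simp; ring
  rw [key]
  have h0 : 0 ≤ p / ((n : ℝ) + 1) := by positivity
  have h1 : p / ((n : ℝ) + 1) ≤ 1 / (n + 1) := by gcongr
  constructor <;> linarith
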